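/- The least fixed point defining infinitary rewriting is attained within ω₁ iterations: for the monotone map F(x) = νy.((→ε ∪ ↓x)* ∘ ↓y), define ordinal approximants by F_0 = ∅, F_{α+1} = F(F_α), and F_λ = ⋃_{β<λ} F_β for limit λ. Then F_{ω₁} = μF = →→→, where ω₁ is the first uncountable ordinal. -/

import Mathlib

open Relation

/-- The polynomial functor of a signature. -/
def Sig {F : Type} (ar : F → ℕ) (X : Type) : PFunctor.{0} :=
  ⟨X ⊕ F, fun a => match a with
    | Sum.inl _ => Empty
    | Sum.inr f => Fin (ar f)⟩

/-- Possibly infinite terms: the final coalgebra (M-type) of the signature functor. -/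
abbrev Tm {F : Type} (ar : F → ℕ) (X : Type) : Type := (Sig ar X).M

/-- The lifting `↓R` of a relation on terms. -/
def lift {F : Type} (ar : F → ℕ) (X : Type) (R : Tm ar X → Tm ar X → Prop) :
    Tm ar X → Tm ar X → Prop := fun s t =>
  s = t ∨ ∃ (f : F) (sa ta : Fin (ar f) → Tm ar X),
    s = PFunctor.M.mk ⟨Sum.inr f, sa⟩ ∧ t = PFunctor.M.mk ⟨Sum.inr f, ta⟩ ∧
    ∀ i, R (sa i) (ta i)

/-- Knaster–Tarski least fixed point. -/
def mu {L : Type*} [CompleteLattice L] (f : L → L) : L := sInf {x | f x ≤ x}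

/-- Knaster–Tarski greatest fixed point. -/
def nu {L : Type*} [CompleteLattice L] (f : L → L) : L := sSup {x | x ≤ f x}

/-- `F x = νy.((→ε ∪ ↓x)* ∘ ↓y)`. -/
def Fmap {F X : Type} (ar : F → ℕ) (root : Tm ar X → Tm ar X → Prop)
    (x : Tm ar X → Tm ar X → Prop) : Tm ar X → Tm ar X → Prop :=
  nu (fun y => Relation.Comp (ReflTransGen (root ⊔ lift ar X x)) (lift ar X y))

/-- The infinitary rewrite relation `→→→ := μx.νy.((→ε ∪ ↓x)* ∘ ↓y)`. -/
def ired {F X : Type} (ar : F → ℕ) (root : Tm ar X → Tm ar X → Prop) :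
    Tm ar X → Tm ar X → Prop :=
  mu (Fmap ar root)

/-- The ordinal approximants of the least fixed point of `F`:
`F_0 = ∅`, `F_{α+1} = F(F_α)`, and `F_λ = ⋃_{β<λ} F_β` for limit `λ`. -/
noncomputable def approx {F X : Type} (ar : F → ℕ)
    (root : Tm ar X → Tm ar X → Prop) (o : Ordinal.{0}) :
    Tm ar X → Tm ar X → Prop :=
  Ordinal.limitRecOn o ⊥ (fun _ ih => Fmap ar root ih)
    (fun o _ ih => ⨆ (b : {b : Ordinal.{0} // b < o}), ih b.1 b.2)

/-!
Call a set countably directed if its countable subsets have upper bounds in it, and call a map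
σ-continuous if it preserves suprema of countably directed sets. The approximants below `ω₁` form
a countably directed set, so the least fixed point of a σ-continuous map is reached at `ω₁`.

It remains to see that `x ↦ νy. G x y` is σ-continuous whenever `G` is so in each variable. The
witness of membership in a greatest fixed point can be taken countable: if `k` is an `ℵ₁`-compact
element below `νy. G x y`, then σ-continuity of `G x` provides `ℵ₁`-compact elements
`k = k₀ ≤ G x k₁`, `k₁ ≤ G x k₂`, …, and `K = ⨆ n, kₙ` is an `ℵ₁`-compact postfixed point of `G x`.
When `x = sup d`, compactness of `K` yields a single `x' ∈ d` with `K ≤ G x' K`, hence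
`k ≤ νy. G x' y`. For rewriting, `G` is even Scott continuous in each variable because arities and
the steps of `(→ε ∪ ↓x)*` are finite.
-/

section CountablyDirected

variable {L M : Type*}

/-- Countable directedness: every countable subset of `d`, in particular the empty one, has an
upper bound in `d`. The maps preserving suprema of such sets are the σ-continuous ones. -/
def IsCountablyDirected [Preorder L] (d : Set L) : Prop :=
  ∀ c ⊆ d, c.Countable → ∃ u ∈ d, u ∈ upperBounds c

namespace IsCountablyDirected

variable [Preorder L] [Preorder M] {d : Set L}

theorem nonempty (hd : IsCountablyDirected d) : d.Nonempty :=
  let ⟨u, hu, _⟩ := hd ∅ (Set.empty_subset d) Set.countable_empty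
  ⟨u, hu⟩

theorem directedOn (hd : IsCountablyDirected d) : DirectedOn (· ≤ ·) d := by
  intro a ha b hb
  obtain ⟨u, hu, hub⟩ := hd {a, b} (Set.pair_subset ha hb) (Set.to_countable _)
  exact ⟨u, hu, hub (Set.mem_insert a {b}), hub (Set.mem_insert_of_mem a rfl)⟩

theorem exists_forall_le (hd : IsCountablyDirected d) {ι : Type*} [Countable ι] {f : ι → L}
    (hf : ∀ i, f i ∈ d) : ∃ u ∈ d, ∀ i, f i ≤ u := by
  obtain ⟨u, hu, hub⟩ := hd (Set.range f) (Set.range_subset_iff.2 hf) (Set.countable_range f)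
  exact ⟨u, hu, fun i => hub (Set.mem_range_self i)⟩

theorem image (hd : IsCountablyDirected d) {f : L → M} (hf : Monotone f) :
    IsCountablyDirected (f '' d) := by
  intro c hcd hc
  have : Countable c := hc.to_subtype
  choose g hgd hg using fun y : c => hcd y.2
  obtain ⟨u, hu, hgu⟩ := hd.exists_forall_le hgd
  exact ⟨f u, Set.mem_image_of_mem f hu, fun y hy => (hg ⟨y, hy⟩).ge.trans (hf (hgu ⟨y, hy⟩))⟩

end IsCountablyDirected

theorem isCountablyDirected_pair [Preorder L] {a b : L} (hab : a ≤ b) :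
    IsCountablyDirected {a, b} := by
  refine fun c hc _ => ⟨b, Set.mem_insert_of_mem a rfl, fun x hx => ?_⟩
  rcases hc hx with rfl | rfl
  exacts [hab, le_rfl]

theorem isCountablyDirected_Iio_omega_one :
    IsCountablyDirected (Set.Iio (Ordinal.omega 1)) := by
  intro c hcω hc
  have : Countable c := hc.to_subtype
  exact ⟨⨆ a : c, a.1, Ordinal.iSup_lt_omega_one fun a => hcω a.2,
    fun a ha => Ordinal.le_iSup (fun a : c => a.1) ⟨a, ha⟩⟩

end CountablyDirected

section LfpApprox

universe u

variable {L : Type u} [CompleteLattice L]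

open OrdinalApprox

theorem isLUB_lfpApprox_image_Iio (f : L →o L) (x : L) {o : Ordinal.{u}}
    (ho : Order.IsSuccLimit o) : IsLUB (lfpApprox f x '' Set.Iio o) (lfpApprox f x o) := by
  rw [lfpApprox_of_isSuccLimit f ho, ← sSup_image']
  exact isLUB_sSup _

theorem lfpApprox_omega_one_eq_lfp (f : L →o L)
    (hf : ScottContinuousOn {d | IsCountablyDirected d} f) :
    lfpApprox f ⊥ (Ordinal.omega 1) = f.lfp := by
  refine le_antisymm (lfpApprox_le_of_mem_fixedPoints f f.map_lfp bot_le _) (f.lfp_le ?_)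
  have hdir : IsCountablyDirected (lfpApprox f ⊥ '' Set.Iio (Ordinal.omega 1)) :=
    isCountablyDirected_Iio_omega_one.image (lfpApprox_mono_right f)
  have hlub := isLUB_lfpApprox_image_Iio f ⊥ (Cardinal.isSuccLimit_omega 1)
  refine (isLUB_le_iff (hf hdir hdir.nonempty hdir.directedOn hlub)).2 ?_
  rintro _ ⟨_, ⟨o, ho, rfl⟩, rfl⟩
  exact apply_lfpApprox_le_lfpApprox_of_lt f ho

end LfpApprox

section AlephOneCompact

variable {L M : Type*} [CompleteLattice L]

/-- `ℵ₁`-compactness of `k`: a countably directed set whose supremum lies above `k` has an element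
above `k`. In a lattice of relations, these are the countable relations. -/
def IsAlephOneCompact (k : L) : Prop :=
  ∀ d : Set L, IsCountablyDirected d → k ≤ sSup d → ∃ x ∈ d, k ≤ x

theorem isAlephOneCompact_of_isCompactElement {k : L} (hk : IsCompactElement k) :
    IsAlephOneCompact k :=
  fun d hd hkd => hk d (sSup d) hd.nonempty hd.directedOn (isLUB_sSup d) hkd

theorem isAlephOneCompact_iSup {ι : Type*} [Countable ι] {k : ι → L}
    (hk : ∀ i, IsAlephOneCompact (k i)) : IsAlephOneCompact (⨆ i, k i) := by
  intro d hd hkd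
  choose x hxd hkx using fun i => hk i d hd ((le_iSup k i).trans hkd)
  obtain ⟨u, hu, hxu⟩ := hd.exists_forall_le hxd
  exact ⟨u, hu, iSup_le fun i => (hkx i).trans (hxu i)⟩

theorem isCountablyDirected_setOf_isAlephOneCompact_le (y : L) :
    IsCountablyDirected {k | IsAlephOneCompact k ∧ k ≤ y} := by
  intro c hcy hc
  have : Countable c := hc.to_subtype
  exact ⟨⨆ k : c, k.1, ⟨isAlephOneCompact_iSup fun k => (hcy k.2).1,
    iSup_le fun k => (hcy k.2).2⟩, fun k hk => le_iSup (fun k : c => k.1) ⟨k, hk⟩⟩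

theorem isLUB_setOf_isAlephOneCompact_le [IsCompactlyGenerated L] (y : L) :
    IsLUB {k | IsAlephOneCompact k ∧ k ≤ y} y := by
  refine ⟨fun k hk => hk.2, fun z hz => le_iff_compact_le_imp.2 fun k hk hky => ?_⟩
  exact hz ⟨isAlephOneCompact_of_isCompactElement hk, hky⟩

theorem IsAlephOneCompact.exists_le_map [Preorder M] {f : M → L}
    (hf : ScottContinuousOn {d | IsCountablyDirected d} f) {d : Set M} (hd : IsCountablyDirected d)
    {y : M} (hy : IsLUB d y) {k : L} (hk : IsAlephOneCompact k) (hky : k ≤ f y) :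
    ∃ x ∈ d, k ≤ f x := by
  have hmono : Monotone f := hf.monotone _ fun _ _ => isCountablyDirected_pair
  rw [← (hf hd hd.nonempty hd.directedOn hy).sSup_eq] at hky
  obtain ⟨_, ⟨x, hx, rfl⟩, hkx⟩ := hk _ (hd.image hmono) hky
  exact ⟨x, hx, hkx⟩

variable [IsCompactlyGenerated L]

theorem IsAlephOneCompact.exists_postfixed (f : L →o L)
    (hf : ScottContinuousOn {d | IsCountablyDirected d} f) {k : L} (hk : IsAlephOneCompact k)
    (hkf : k ≤ f.gfp) : ∃ K, IsAlephOneCompact K ∧ k ≤ K ∧ K ≤ f K := by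
  have exists_next (c : {c : L // IsAlephOneCompact c ∧ c ≤ f.gfp}) :
      ∃ c' : {c : L // IsAlephOneCompact c ∧ c ≤ f.gfp}, c.1 ≤ f c'.1 := by
    obtain ⟨c', hc', hcc'⟩ := c.2.1.exists_le_map hf
      (isCountablyDirected_setOf_isAlephOneCompact_le f.gfp) (isLUB_setOf_isAlephOneCompact_le _)
      (f.map_gfp.symm ▸ c.2.2)
    exact ⟨⟨c', hc'⟩, hcc'⟩
  choose next le_map_next using exists_next
  let chain (n : ℕ) : {c : L // IsAlephOneCompact c ∧ c ≤ f.gfp} := next^[n] ⟨k, hk, hkf⟩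
  refine ⟨⨆ n, (chain n).1, isAlephOneCompact_iSup fun n => (chain n).2.1,
    le_iSup (fun n => (chain n).1) 0, iSup_le fun n => ?_⟩
  calc (chain n).1 ≤ f (next (chain n)).1 := le_map_next (chain n)
    _ = f (chain (n + 1)).1 := by simp only [chain, Function.iterate_succ_apply']
    _ ≤ f (⨆ n, (chain n).1) := f.monotone (le_iSup (fun n => (chain n).1) (n + 1))

theorem scottContinuousOn_gfp_comp [Preorder M] (G : M →o L →o L)
    (hleft : ∀ y, ScottContinuousOn {d | IsCountablyDirected d} fun x => G x y)
    (hright : ∀ x, ScottContinuousOn {d | IsCountablyDirected d} (G x)) :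
    ScottContinuousOn {d | IsCountablyDirected d} (OrderHom.gfp.comp G) := by
  intro d hd _ _ a ha
  refine ⟨(OrderHom.gfp.comp G).monotone.mem_upperBounds_image ha.1, fun z hz => ?_⟩
  refine le_iff_compact_le_imp.2 fun k hk hka => ?_
  obtain ⟨K, hK, hkK, hKG⟩ :=
    (isAlephOneCompact_of_isCompactElement hk).exists_postfixed (G a) (hright a) hka
  obtain ⟨x, hx, hKx⟩ := hK.exists_le_map (hleft K) hd ha hKG
  calc k ≤ K := hkK
    _ ≤ (G x).gfp := (G x).le_gfp hKx
    _ ≤ z := hz (Set.mem_image_of_mem _ hx)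

end AlephOneCompact

theorem lfpApprox_omega_one_gfp_comp_eq_lfp {L : Type*} [CompleteLattice L] [IsCompactlyGenerated L]
    (G : L →o L →o L) (hleft : ∀ y, ScottContinuousOn {d | IsCountablyDirected d} fun x => G x y)
    (hright : ∀ x, ScottContinuousOn {d | IsCountablyDirected d} (G x)) :
    OrdinalApprox.lfpApprox (OrderHom.gfp.comp G) ⊥ (Ordinal.omega 1) =
      (OrderHom.gfp.comp G).lfp :=
  lfpApprox_omega_one_eq_lfp _ (scottContinuousOn_gfp_comp G hleft hright)

instance isCompactlyGenerated_of_isAtomistic {L : Type*} [Order.Frame L] [IsAtomistic L] :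
    IsCompactlyGenerated L where
  exists_sSup_eq x := by
    obtain ⟨s, rfl, hatom⟩ := eq_sSup_atoms x
    refine ⟨s, fun a ha => ?_, rfl⟩
    rw [CompleteLattice.isCompactElement_iff_le_of_directed_sSup_le]
    exact fun d _ _ hle => (hatom a ha).le_sSup.1 hle

section Relations

variable {α β γ δ : Type*}

theorem scottContinuous_of_forall_sSup_exists_mem {f : (α → β → Prop) → γ → δ → Prop}
    (hmono : Monotone f)
    (hf : ∀ d : Set (α → β → Prop), d.Nonempty → DirectedOn (· ≤ ·) d →
      ∀ a b, f (sSup d) a b → ∃ r ∈ d, f r a b) :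
    ScottContinuous f := by
  refine ScottContinuous.of_map_sSup fun d hne hdir => le_antisymm ?_ ?_
  · intro a b hab
    obtain ⟨r, hr, hrab⟩ := hf d hne hdir a b hab
    exact (binary_relation_sSup_iff _).2 ⟨f r, Set.mem_image_of_mem f hr, hrab⟩
  · exact sSup_le (hmono.mem_upperBounds_image (isLUB_sSup d).1)

theorem scottContinuous_relationComp_left (s : β → γ → Prop) :
    ScottContinuous fun r : α → β → Prop => Comp r s := by
  refine scottContinuous_of_forall_sSup_exists_mem ?_ ?_
  · rintro r r' hr a c ⟨b, hab, hbc⟩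
    exact ⟨b, hr a b hab, hbc⟩
  · rintro d - - a c ⟨b, hab, hbc⟩
    obtain ⟨r, hr, hrab⟩ := (binary_relation_sSup_iff d).1 hab
    exact ⟨r, hr, b, hrab, hbc⟩

theorem scottContinuous_relationComp_right (r : α → β → Prop) :
    ScottContinuous fun s : β → γ → Prop => Comp r s := by
  refine scottContinuous_of_forall_sSup_exists_mem ?_ ?_
  · rintro s s' hs a c ⟨b, hab, hbc⟩
    exact ⟨b, hab, hs b c hbc⟩
  · rintro d - - a c ⟨b, hab, hbc⟩
    obtain ⟨s, hs, hsbc⟩ := (binary_relation_sSup_iff d).1 hbc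
    exact ⟨s, hs, b, hab, hsbc⟩

theorem scottContinuous_reflTransGen :
    ScottContinuous (ReflTransGen : (α → α → Prop) → α → α → Prop) := by
  refine scottContinuous_of_forall_sSup_exists_mem (fun _ _ h => ReflTransGen.mono h) ?_
  intro d hne hdir a b hab
  induction hab with
  | refl =>
    obtain ⟨r, hr⟩ := hne
    exact ⟨r, hr, .refl⟩
  | tail _ hbc ih =>
    obtain ⟨r, hr, hab⟩ := ih
    obtain ⟨r', hr', hbc⟩ := (binary_relation_sSup_iff d).1 hbc
    obtain ⟨u, hu, hru, hr'u⟩ := hdir r hr r' hr'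
    exact ⟨u, hu, (ReflTransGen.mono hru _ _ hab).tail (hr'u _ _ hbc)⟩

end Relations

section Terms

variable {F X : Type} (ar : F → ℕ) (root : Tm ar X → Tm ar X → Prop)

theorem lift_mono : Monotone (lift ar X) := by
  rintro r r' hr s t (rfl | ⟨f, sa, ta, hs, ht, hargs⟩)
  · exact Or.inl rfl
  · exact Or.inr ⟨f, sa, ta, hs, ht, fun i => hr _ _ (hargs i)⟩

theorem scottContinuous_lift : ScottContinuous (lift ar X) := by
  refine scottContinuous_of_forall_sSup_exists_mem (lift_mono ar) ?_
  rintro d hne hdir s t (rfl | ⟨f, sa, ta, hs, ht, hargs⟩)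
  · obtain ⟨r, hr⟩ := hne
    exact ⟨r, hr, Or.inl rfl⟩
  · choose r hrd hr using fun i => (binary_relation_sSup_iff d).1 (hargs i)
    have : Nonempty d := hne.to_subtype
    obtain ⟨u, hru⟩ := hdir.directed_val.finite_le fun i => (⟨r i, hrd i⟩ : d)
    exact ⟨u, u.2, Or.inr ⟨f, sa, ta, hs, ht, fun i => hru i _ _ (hr i)⟩⟩

theorem scottContinuous_reflTransGen_sup_lift :
    ScottContinuous fun x => ReflTransGen (root ⊔ lift ar X x) := by
  have hsup : ScottContinuous fun x => root ⊔ lift ar X x :=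
    ((ScottContinuous.const root).prodMk (scottContinuous_lift ar)).comp ScottContinuous.sup₂
  exact hsup.comp scottContinuous_reflTransGen

/-- The operator `(x, y) ↦ (→ε ∪ ↓x)* ∘ ↓y`, bundled with its monotonicity in both variables, so
that `Fmap ar root` is `OrderHom.gfp.comp (rewriteHom ar root)` definitionally. -/
def rewriteHom : (Tm ar X → Tm ar X → Prop) →o (Tm ar X → Tm ar X → Prop) →o
    (Tm ar X → Tm ar X → Prop) where
  toFun x :=
    { toFun := fun y => Comp (ReflTransGen (root ⊔ lift ar X x)) (lift ar X y)
      monotone' := (scottContinuous_relationComp_right _).monotone.comp (lift_mono ar) }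
  monotone' _ _ h y := (scottContinuous_relationComp_left (lift ar X y)).monotone
    ((scottContinuous_reflTransGen_sup_lift ar root).monotone h)

theorem scottContinuous_rewriteHom_left (y : Tm ar X → Tm ar X → Prop) :
    ScottContinuous fun x => rewriteHom ar root x y :=
  (scottContinuous_reflTransGen_sup_lift ar root).comp
    (scottContinuous_relationComp_left (lift ar X y))

theorem scottContinuous_rewriteHom_right (x : Tm ar X → Tm ar X → Prop) :
    ScottContinuous (rewriteHom ar root x) :=
  (scottContinuous_lift ar).comp (scottContinuous_relationComp_right _)

theorem approx_eq_lfpApprox (o : Ordinal.{0}) :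
    approx ar root o =
      OrdinalApprox.lfpApprox (OrderHom.gfp.comp (rewriteHom ar root)) ⊥ o := by
  induction o using Ordinal.limitRecOn with
  | zero => rw [approx, Ordinal.limitRecOn_zero, OrdinalApprox.lfpApprox_zero]
  | add_one o ih =>
    rw [approx, Ordinal.limitRecOn_add_one, OrdinalApprox.lfpApprox_add_one _ bot_le, ← ih]
    rfl
  | limit o ho ih =>
    rw [approx, Ordinal.limitRecOn_limit _ _ _ _ ho, OrdinalApprox.lfpApprox_of_isSuccLimit _ ho]
    exact iSup_congr fun b => ih b.1 b.2

end Terms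

/-- The least fixed point defining infinitary rewriting is attained within `ω₁`
iterations: `F_{ω₁} = μF = →→→`, where `ω₁` is the first uncountable ordinal. -/
theorem approx_omega1_eq_ired {F X : Type} (ar : F → ℕ)
    (root : Tm ar X → Tm ar X → Prop) :
    approx ar root (Ordinal.omega 1) = mu (Fmap ar root) ∧
    mu (Fmap ar root) = ired ar root := by
  refine ⟨?_, rfl⟩
  rw [approx_eq_lfpApprox]
  exact lfpApprox_omega_one_gfp_comp_eq_lfp (rewriteHom ar root)
    (fun y => (scottContinuous_rewriteHom_left ar root y).scottContinuousOn)
    (fun x => (scottContinuous_rewriteHom_right ar root x).scottContinuousOn)
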